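/- Fix d, m, n ∈ ℕ, κ > 0, δ ∈ (0,1), and R > 0, and let x₁, …, xₙ ∈ ℝᵈ with ‖xᵢ‖₂ = 1 for all i. Draw a random initialization (θ(0), a) where θ₁(0), …, θ_m(0) are i.i.d. Gaussian N(0, κ² I_d) vectors in ℝᵈ and a₁, …, a_m are i.i.d. uniform on {−1, +1}, independent of the θ_r(0). For parameters θ = (θ₁, …, θ_m) ∈ (ℝᵈ)ᵐ define the two-layer ReLU network f_{θ,a}(x) = (1/√m) Σ_{r=1}^m a_r · max(⟨θ_r, x⟩, 0). For B > 0, let F_{R,B} = { f_{θ,a} : ‖θ_r − θ_r(0)‖₂ ≤ R for all r ∈ [m], and ‖θ − θ(0)‖_F ≤ B }, and let the empirical Rademacher complexity of F_{R,B} on the sample (x₁,…,xₙ) be R_S(F_{R,B}) = (1/n) E_{ε}[ sup_{f ∈ F_{R,B}} Σ_{i=1}^n εᵢ f(xᵢ) ], where ε = (ε₁,…,εₙ) is uniform on {−1,+1}ⁿ. Then with probability at least 1 − δ over the random initialization (θ(0), a), simultaneously for every B > 0: R_S(F_{R,B}) ≤ (B/√(2n)) · (1 + (2 log(2/δ)/m)^{1/4})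 + 2R²√m/κ + R√(2 log(2/δ)). -/

import Mathlib

open MeasureTheory ProbabilityTheory Matrix
open scoped RealInnerProductSpace

/-!
A ReLU whose preactivation moves by at most `R` stays affine unless the preactivation started in
`[-R, R]`. Hence on `F_{R,B}` the network is, up to an error controlled by the number of such
unstable neuron-sample pairs, its linearization at the initialization: an affine image of a ball of
radius `B` in the Hilbert space of weights. The Rademacher complexity of the linear part is at most
`B / n` times the root of the sum of the squared norms of the tangent features (Cauchy-Schwarz, then
Jensen), and this sum counts the active pairs. A preactivation is `N(0, κ²)`, so a pair is active
with probability at most `1 / 2` and unstable with probability at most `R / κ`; Hoeffding over the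
independent neurons turns these into bounds on the two counts, each failing with probability at most
`δ / 2`. Neither event depends on `B`.
-/

section RademacherMeasure

/-- The law of a Rademacher variable: the uniform distribution on `{-1, 1} ⊆ ℝ`. -/
noncomputable def signMeasure : Measure ℝ :=
  (1 / 2 : ENNReal) • Measure.dirac (-1 : ℝ) + (1 / 2 : ENNReal) • Measure.dirac (1 : ℝ)

instance : IsProbabilityMeasure signMeasure :=
  ⟨by simp [signMeasure, ENNReal.inv_two_add_inv_two]⟩

lemma ae_mem_signMeasure : ∀ᵐ t ∂signMeasure, t ∈ ({-1, 1} : Set ℝ) := by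
  rw [signMeasure, ae_add_measure_iff]
  constructor <;> exact Measure.ae_smul_measure (by simp) _

lemma integral_id_signMeasure : ∫ t, t ∂signMeasure = 0 := by
  have integrable_smul_dirac (s : ℝ) :
      Integrable (fun t : ℝ ↦ t) ((1 / 2 : ENNReal) • Measure.dirac s) :=
    (integrable_dirac (by simp)).smul_measure (by simp)
  rw [signMeasure, integral_add_measure (integrable_smul_dirac _) (integrable_smul_dirac _)]
  simp

/-- The law of a Rademacher vector: the uniform distribution on `{-1, 1}^ι ⊆ ℝ^ι`. -/
noncomputable def rademacherMeasure (ι : Type*) [Fintype ι] : Measure (ι → ℝ) :=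
  Measure.pi fun _ ↦ signMeasure

variable {ι : Type*} [Fintype ι]

instance : IsProbabilityMeasure (rademacherMeasure ι) := by
  unfold rademacherMeasure; infer_instance

lemma measurePreserving_eval_rademacherMeasure (i : ι) :
    MeasurePreserving (Function.eval i) (rademacherMeasure ι) signMeasure :=
  measurePreserving_eval (fun _ ↦ signMeasure) i

lemma ae_mem_rademacherMeasure :
    ∀ᵐ ε ∂rademacherMeasure ι, ε ∈ Set.univ.pi fun _ ↦ ({-1, 1} : Set ℝ) := by
  simp only [Set.mem_univ_pi, ae_all_iff]
  exact fun i ↦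
    (measurePreserving_eval_rademacherMeasure i).quasiMeasurePreserving.ae ae_mem_signMeasure

lemma ae_abs_eq_one_rademacherMeasure : ∀ᵐ ε ∂rademacherMeasure ι, ∀ i, |ε i| = 1 := by
  filter_upwards [ae_mem_rademacherMeasure] with ε hε i
  exact (abs_eq zero_le_one).2 (hε i trivial).symm

lemma integrable_rademacherMeasure {F : Type*} [NormedAddCommGroup F] (f : (ι → ℝ) → F) :
    Integrable f (rademacherMeasure ι) := by
  rw [← Measure.restrict_eq_self_of_ae_mem (ae_mem_rademacherMeasure)]
  exact IntegrableOn.of_finite (Set.Finite.pi fun _ ↦ Set.toFinite _)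

lemma integral_eval_rademacherMeasure (i : ι) : ∫ ε, ε i ∂rademacherMeasure ι = 0 :=
  (measurePreserving_eval_rademacherMeasure i).hasLaw.integral_eq.trans integral_id_signMeasure

lemma integral_eval_mul_eval_rademacherMeasure [DecidableEq ι] (i j : ι) :
    ∫ ε, ε i * ε j ∂rademacherMeasure ι = if i = j then 1 else 0 := by
  split_ifs with hij
  · subst hij
    have sq_eq_one : (fun ε : ι → ℝ ↦ ε i * ε i) =ᵐ[rademacherMeasure ι] fun _ ↦ 1 := by
      filter_upwards [ae_abs_eq_one_rademacherMeasure] with ε hε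
      rw [← abs_mul_abs_self, hε i, one_mul]
    simp [integral_congr_ae sq_eq_one]
  · have indep : iIndepFun (fun (i : ι) (ε : ι → ℝ) ↦ ε i) (rademacherMeasure ι) :=
      iIndepFun_pi (X := fun _ ↦ id) fun _ ↦ aemeasurable_id
    rw [(indep.indepFun hij).integral_fun_mul_eq_mul_integral
      (integrable_rademacherMeasure _).1 (integrable_rademacherMeasure _).1,
      integral_eval_rademacherMeasure, zero_mul]

variable {H : Type*} [NormedAddCommGroup H] [InnerProductSpace ℝ H]

lemma integral_norm_sum_smul_sq_rademacherMeasure (v : ι → H) :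
    ∫ ε, ‖∑ i, ε i • v i‖ ^ 2 ∂rademacherMeasure ι = ∑ i, ‖v i‖ ^ 2 := by
  classical
  have norm_sq_expand (ε : ι → ℝ) :
      ‖∑ i, ε i • v i‖ ^ 2 = ∑ i, ∑ j, ε i * ε j * ⟪v j, v i⟫ := by
    simp only [← real_inner_self_eq_norm_sq, sum_inner, inner_sum, real_inner_smul_left,
      real_inner_smul_right, mul_assoc]
  simp only [norm_sq_expand]
  rw [integral_finsetSum _ fun _ _ ↦ integrable_rademacherMeasure _]
  refine Finset.sum_congr rfl fun i _ ↦ ?_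
  rw [integral_finsetSum _ fun _ _ ↦ integrable_rademacherMeasure _]
  simp [integral_mul_const, integral_eval_mul_eval_rademacherMeasure]

lemma integral_norm_sum_smul_rademacherMeasure_le (v : ι → H) :
    ∫ ε, ‖∑ i, ε i • v i‖ ∂rademacherMeasure ι ≤ √(∑ i, ‖v i‖ ^ 2) := by
  rw [← integral_norm_sum_smul_sq_rademacherMeasure]
  refine Real.le_sqrt_of_sq_le ?_
  exact (even_two.convexOn_pow (𝕜 := ℝ)).map_integral_le (by fun_prop) isClosed_univ (by simp)
    (integrable_rademacherMeasure _) (integrable_rademacherMeasure _)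

end RademacherMeasure

section RademacherComplexity

variable {ι X : Type*} {n : ℕ}

/-- The empirical Rademacher complexity of the class `{f k | k : ι}` on the sample `x`. The
supremum is that of `ℝ`, hence `0` at sign vectors for which it is not finite. -/
noncomputable def rademacherComplexity (f : ι → X → ℝ) (x : Fin n → X) : ℝ :=
  (1 / n : ℝ) * ∫ ε, (⨆ k, ∑ i, ε i * f k (x i)) ∂rademacherMeasure (Fin n)

variable {H : Type*} [NormedAddCommGroup H] [InnerProductSpace ℝ H]

lemma sum_mul_le_of_abs_sub_affine_le {J : Type*} [Fintype J] {ε y b c : J → ℝ} {w : H}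
    {v : J → H} {B : ℝ} (hε : ∀ i, |ε i| ≤ 1) (hw : ‖w‖ ≤ B)
    (hy : ∀ i, |y i - (b i + ⟪w, v i⟫)| ≤ c i) :
    ∑ i, ε i * y i ≤ ∑ i, ε i * b i + B * ‖∑ i, ε i • v i‖ + ∑ i, c i := by
  have termwise (i : J) : ε i * y i ≤ ε i * b i + ⟪w, ε i • v i⟫ + c i := by
    have remainder_le : ε i * (y i - (b i + ⟪w, v i⟫)) ≤ c i :=
      (le_abs_self _).trans <| (abs_mul _ _).trans_le <|
        (mul_le_of_le_one_left (abs_nonneg _) (hε i)).trans (hy i)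
    rw [real_inner_smul_right]
    linarith
  calc ∑ i, ε i * y i
      ≤ ∑ i, (ε i * b i + ⟪w, ε i • v i⟫ + c i) := Finset.sum_le_sum fun i _ ↦ termwise i
    _ = ∑ i, ε i * b i + ⟪w, ∑ i, ε i • v i⟫ + ∑ i, c i := by
      simp only [Finset.sum_add_distrib, inner_sum]
    _ ≤ ∑ i, ε i * b i + B * ‖∑ i, ε i • v i‖ + ∑ i, c i := by
      gcongr
      exact (real_inner_le_norm _ _).trans (by gcongr)

theorem rademacherComplexity_le_of_abs_sub_affine_le [Nonempty ι] {f : ι → X → ℝ}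
    {x : Fin n → X} {w : ι → H} {v : Fin n → H} {b c : Fin n → ℝ} {B : ℝ}
    (hw : ∀ k, ‖w k‖ ≤ B) (hf : ∀ k i, |f k (x i) - (b i + ⟪w k, v i⟫)| ≤ c i) :
    rademacherComplexity f x ≤ (1 / n : ℝ) * (B * √(∑ i, ‖v i‖ ^ 2) + ∑ i, c i) := by
  have B_nonneg : 0 ≤ B := (norm_nonneg _).trans (hw (Classical.arbitrary ι))
  have iSup_le : ∀ᵐ ε ∂rademacherMeasure (Fin n), ⨆ k, ∑ i, ε i * f k (x i) ≤
      ∑ i, ε i * b i + B * ‖∑ i, ε i • v i‖ + ∑ i, c i := by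
    filter_upwards [ae_abs_eq_one_rademacherMeasure] with ε hε
    exact ciSup_le fun k ↦ sum_mul_le_of_abs_sub_affine_le (fun i ↦ (hε i).le) (hw k) (hf k)
  have integral_offset : ∫ ε, ∑ i, ε i * b i ∂rademacherMeasure (Fin n) = 0 := by
    rw [integral_finsetSum _ fun _ _ ↦ integrable_rademacherMeasure _]
    simp [integral_mul_const, integral_eval_rademacherMeasure]
  unfold rademacherComplexity
  gcongr
  calc ∫ ε, (⨆ k, ∑ i, ε i * f k (x i)) ∂rademacherMeasure (Fin n)
      ≤ ∫ ε, (∑ i, ε i * b i + B * ‖∑ i, ε i • v i‖ + ∑ i, c i) ∂rademacherMeasure (Fin n) :=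
        integral_mono_ae (integrable_rademacherMeasure _) (integrable_rademacherMeasure _) iSup_le
    _ = B * ∫ ε, ‖∑ i, ε i • v i‖ ∂rademacherMeasure (Fin n) + ∑ i, c i := by
        rw [integral_add (integrable_rademacherMeasure _) (integrable_rademacherMeasure _),
          integral_add (integrable_rademacherMeasure _) (integrable_rademacherMeasure _),
          integral_offset, integral_const_mul]
        simp
    _ ≤ B * √(∑ i, ‖v i‖ ^ 2) + ∑ i, c i := by
        gcongr
        exact integral_norm_sum_smul_rademacherMeasure_le v

end RademacherComplexity

lemma inner_toLp_toLp_eq_dotProduct {ι : Type*} [Fintype ι] (u v : ι → ℝ) :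
    ⟪WithLp.toLp 2 u, WithLp.toLp 2 v⟫ = u ⬝ᵥ v := by
  simp [EuclideanSpace.inner_toLp_toLp, dotProduct_comm]

section Gaussian

variable {Ω ι : Type*} {mΩ : MeasurableSpace Ω} {P : Measure Ω} [Fintype ι]

lemma hasLaw_sum_gaussianReal_of_iIndepFun {X : ι → Ω → ℝ} {μ : ι → ℝ} {v : ι → NNReal}
    (hindep : iIndepFun X P) (hX : ∀ i, HasLaw (X i) (gaussianReal (μ i) (v i)) P) :
    HasLaw (fun ω ↦ ∑ i, X i ω) (gaussianReal (∑ i, μ i) (∑ i, v i)) P where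
  aemeasurable := Finset.aemeasurable_fun_sum _ fun i _ ↦ (hX i).aemeasurable
  map_eq := by
    have := hindep.isProbabilityMeasure
    refine Measure.ext_of_charFun ?_
    ext t
    rw [hindep.charFun_map_fun_sum_eq_prod fun i ↦ (hX i).aemeasurable]
    simp only [Finset.prod_apply, (hX _).map_eq, charFun_gaussianReal, ← Complex.exp_sum]
    push_cast
    rw [Finset.sum_sub_distrib, ← Finset.sum_mul, ← Finset.mul_sum, ← Finset.sum_div,
      ← Finset.sum_mul]

lemma hasLaw_dotProduct_pi_gaussianReal (v : NNReal) (z : ι → ℝ) :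
    HasLaw (fun θ : ι → ℝ ↦ θ ⬝ᵥ z) (gaussianReal 0 (∑ j, ‖z j‖₊ ^ 2 * v))
      (Measure.pi fun _ ↦ gaussianReal 0 v) := by
  have indep : iIndepFun (fun (j : ι) (θ : ι → ℝ) ↦ θ j * z j)
      (Measure.pi fun _ ↦ gaussianReal 0 v) :=
    iIndepFun_pi (X := fun j t ↦ t * z j) fun _ ↦ by fun_prop
  have law (j : ι) : HasLaw (fun θ : ι → ℝ ↦ θ j * z j) (gaussianReal 0 (‖z j‖₊ ^ 2 * v))
      (Measure.pi fun _ ↦ gaussianReal 0 v) := by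
    convert gaussianReal_mul_const (measurePreserving_eval (fun _ ↦ gaussianReal 0 v) j).hasLaw
      (z j) using 2
    · simp
    · congr 1; ext; simp
  simpa [dotProduct] using hasLaw_sum_gaussianReal_of_iIndepFun indep law

lemma measureReal_gaussianReal_Ioi_zero_le (v : NNReal) :
    (gaussianReal 0 v).real (Set.Ioi 0) ≤ 1 / 2 := by
  have symm : (gaussianReal 0 v).real (Set.Iio 0) = (gaussianReal 0 v).real (Set.Ioi 0) := by
    have map_neg : (gaussianReal 0 v).map (fun t ↦ -t) = gaussianReal 0 v := by
      rw [gaussianReal_map_neg, neg_zero]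
    conv_rhs => rw [← map_neg, map_measureReal_apply measurable_neg measurableSet_Ioi]
    simp
  have disjoint : Disjoint (Set.Iio (0 : ℝ)) (Set.Ioi 0) :=
    (Set.Iio_disjoint_Ici le_rfl).mono_right Set.Ioi_subset_Ici_self
  have union_le_one : (gaussianReal 0 v).real (Set.Iio 0 ∪ Set.Ioi 0) ≤ 1 := measureReal_le_one
  rw [measureReal_union disjoint measurableSet_Ioi, symm] at union_le_one
  linarith

lemma gaussianPDFReal_le (μ : ℝ) (v : NNReal) (t : ℝ) :
    gaussianPDFReal μ v t ≤ (√(2 * Real.pi * v))⁻¹ := by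
  refine mul_le_of_le_one_right (by positivity) (Real.exp_le_one_iff.2 ?_)
  rw [neg_div]
  exact neg_nonpos.2 (by positivity)

lemma measureReal_gaussianReal_Icc_le (μ : ℝ) {v : NNReal} (hv : v ≠ 0) {a b : ℝ} (hab : a ≤ b) :
    (gaussianReal μ v).real (Set.Icc a b) ≤ (b - a) / √(2 * Real.pi * v) := by
  rw [Measure.real, gaussianReal_apply_eq_integral _ hv,
    ENNReal.toReal_ofReal (integral_nonneg fun _ ↦ gaussianPDFReal_nonneg _ _ _)]
  calc ∫ t in Set.Icc a b, gaussianPDFReal μ v t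
      ≤ ∫ _ in Set.Icc a b, (√(2 * Real.pi * v))⁻¹ :=
        integral_mono (integrable_gaussianPDFReal _ _).integrableOn (integrableOn_const (by simp))
          (gaussianPDFReal_le μ v)
    _ = (b - a) / √(2 * Real.pi * v) := by simp [hab, div_eq_mul_inv]

lemma measureReal_gaussianReal_Icc_neg_le {κ R : ℝ} (hκ : 0 < κ) (hR : 0 ≤ R) :
    (gaussianReal 0 (κ ^ 2).toNNReal).real (Set.Icc (-R) R) ≤ R / κ := by
  have sqrt_ge : 2 * κ ≤ √(2 * Real.pi * (κ ^ 2).toNNReal) := by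
    rw [Real.coe_toNNReal _ (sq_nonneg κ)]
    exact Real.le_sqrt_of_sq_le (by nlinarith [Real.pi_gt_three, sq_pos_of_pos hκ])
  calc (gaussianReal 0 (κ ^ 2).toNNReal).real (Set.Icc (-R) R)
      ≤ (R - -R) / √(2 * Real.pi * (κ ^ 2).toNNReal) :=
        measureReal_gaussianReal_Icc_le 0 (by simpa using hκ.ne') (by linarith)
    _ ≤ (R - -R) / (2 * κ) := by gcongr; linarith
    _ = R / κ := by field_simp; ring


lemma hasLaw_inner_pi_gaussianReal_of_norm_eq_one (v : NNReal) {z : ι → ℝ}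
    (hz : ‖WithLp.toLp 2 z‖ = 1) :
    HasLaw (fun θ : ι → ℝ ↦ ⟪WithLp.toLp 2 θ, WithLp.toLp 2 z⟫) (gaussianReal 0 v)
      (Measure.pi fun _ ↦ gaussianReal 0 v) := by
  have sum_sq : ∑ j, ‖z j‖₊ ^ 2 = 1 := by
    rw [EuclideanSpace.norm_eq, Real.sqrt_eq_one] at hz
    exact NNReal.eq (by simpa using hz)
  simpa only [inner_toLp_toLp_eq_dotProduct, ← Finset.sum_mul, sum_sq, one_mul]
    using hasLaw_dotProduct_pi_gaussianReal v z

end Gaussian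

section Concentration

variable {Ω ι : Type*} {mΩ : MeasurableSpace Ω} {P : Measure Ω} [Fintype ι]

lemma iIndepFun_of_hasLaw_pi {𝓧 : ι → Type*} {m𝓧 : ∀ i, MeasurableSpace (𝓧 i)}
    {μ : ∀ i, Measure (𝓧 i)} [∀ i, IsProbabilityMeasure (μ i)] {X : Ω → ∀ i, 𝓧 i}
    (hX : HasLaw X (Measure.pi μ) P) : iIndepFun (fun i ω ↦ X ω i) P := by
  have := hX.isProbabilityMeasure
  exact (iIndepFun_iff_hasLaw_pi_pi fun i ↦ (measurePreserving_eval μ i).comp_hasLaw hX).2 hX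

variable [IsProbabilityMeasure P]

lemma one_sub_le_measureReal_of_ae_mem {s t u : Set Ω}
    (h : ∀ᵐ ω ∂P, ω ∉ t → ω ∉ u → ω ∈ s) : 1 - (P.real t + P.real u) ≤ P.real s := by
  have ae_cover : ∀ᵐ ω ∂P, ω ∈ s ∪ (t ∪ u) := by
    filter_upwards [h] with ω hω
    simp only [Set.mem_union]
    tauto
  have one_le : 1 ≤ P.real (s ∪ (t ∪ u)) := by
    rw [← probReal_univ (μ := P)]
    exact ENNReal.toReal_mono (measure_ne_top _ _)
      (measure_mono_ae (ae_cover.mono fun _ hω _ ↦ hω))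
  linarith [measureReal_union_le (μ := P) s (t ∪ u), measureReal_union_le (μ := P) t u]

variable [Nonempty ι]

lemma measureReal_sum_ge_le_exp_neg_of_mem_Icc {X : ι → Ω → ℝ} {p L : ℝ}
    (hindep : iIndepFun X P) (hX : ∀ i, AEMeasurable (X i) P)
    (hIcc : ∀ i, ∀ᵐ ω ∂P, X i ω ∈ Set.Icc (0 : ℝ) 1) (hp : ∀ i, P[X i] ≤ p) (hL : 0 ≤ L) :
    P.real {ω | Fintype.card ι * p + √(Fintype.card ι * L / 2) ≤ ∑ i, X i ω} ≤
      Real.exp (-L) := by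
  have indep_centered : iIndepFun (fun i ω ↦ X i ω - P[X i]) P :=
    hindep.comp (fun i t ↦ t - ∫ ω, X i ω ∂P) fun _ ↦ by fun_prop
  have subgaussian (i : ι) := hasSubgaussianMGF_of_mem_Icc (hX i) (hIcc i)
  have sum_integral_le : ∑ i, P[X i] ≤ Fintype.card ι * p := by
    simpa using Finset.sum_le_card_nsmul Finset.univ _ p fun i _ ↦ hp i
  calc P.real {ω | Fintype.card ι * p + √(Fintype.card ι * L / 2) ≤ ∑ i, X i ω}
      ≤ P.real {ω | √(Fintype.card ι * L / 2) ≤ ∑ i, (X i ω - P[X i])} := by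
        refine measureReal_mono fun ω hω ↦ ?_
        simp only [Set.mem_ofPred_eq, Finset.sum_sub_distrib] at hω ⊢
        linarith
    _ ≤ _ := HasSubgaussianMGF.measure_sum_ge_le_of_iIndepFun indep_centered
        (fun i _ ↦ subgaussian i) (Real.sqrt_nonneg _)
    _ = Real.exp (-L) := by
        have card_ne_zero : (Fintype.card ι : ℝ) ≠ 0 := by simp
        rw [neg_div, Real.sq_sqrt (by positivity)]
        congr 2
        simp only [sub_zero, Finset.sum_const, Finset.card_univ, nsmul_eq_mul]
        push_cast
        norm_num
        field_simp
        norm_num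

variable {J : Type*} [Fintype J] [Nonempty J]

-- Only the rows are independent, so Hoeffding is applied to the row averages.
lemma measureReal_sum_sum_ge_le_exp_neg_of_mem_Icc {X : ι → Ω → J → ℝ} {p L : ℝ}
    (hindep : iIndepFun X P) (hX : ∀ r i, AEMeasurable (fun ω ↦ X r ω i) P)
    (hIcc : ∀ r i ω, X r ω i ∈ Set.Icc (0 : ℝ) 1) (hp : ∀ r i, P[fun ω ↦ X r ω i] ≤ p)
    (hL : 0 ≤ L) :
    P.real {ω | Fintype.card J * (Fintype.card ι * p + √(Fintype.card ι * L / 2)) ≤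
      ∑ r, ∑ i, X r ω i} ≤ Real.exp (-L) := by
  have card_pos : (0 : ℝ) < Fintype.card J := by exact_mod_cast Fintype.card_pos
  have indep_average : iIndepFun (fun r ω ↦ (∑ i, X r ω i) / Fintype.card J) P :=
    hindep.comp (fun _ t ↦ (∑ i, t i) / Fintype.card J) fun _ ↦ by fun_prop
  have average_mem (r : ι) (ω : Ω) : (∑ i, X r ω i) / Fintype.card J ∈ Set.Icc (0 : ℝ) 1 := by
    refine ⟨div_nonneg (Finset.sum_nonneg fun i _ ↦ (hIcc r i ω).1) card_pos.le,
      (div_le_one card_pos).2 ?_⟩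
    simpa using Finset.sum_le_card_nsmul Finset.univ _ 1 fun i _ ↦ (hIcc r i ω).2
  have integral_average_le (r : ι) : P[fun ω ↦ (∑ i, X r ω i) / Fintype.card J] ≤ p := by
    have integrable (i : J) : Integrable (fun ω ↦ X r ω i) P :=
      .of_mem_Icc 0 1 (hX r i) (ae_of_all _ (hIcc r i))
    rw [integral_div, integral_finsetSum _ fun i _ ↦ integrable i, div_le_iff₀' card_pos]
    simpa using Finset.sum_le_card_nsmul Finset.univ _ p fun i _ ↦ hp r i
  convert measureReal_sum_ge_le_exp_neg_of_mem_Icc indep_average (fun r ↦ by fun_prop)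
    (fun r ↦ ae_of_all _ (average_mem r)) integral_average_le hL using 4 with ω
  rw [← Finset.sum_div, le_div_iff₀' card_pos]

lemma measureReal_sum_indicator_ge_le_exp_neg {𝓨 : Type*} [MeasurableSpace 𝓨]
    {T : ι → Ω → J → 𝓨} {A : Set 𝓨} {p L : ℝ} (hindep : iIndepFun T P)
    (hT : ∀ r i, AEMeasurable (fun ω ↦ T r ω i) P) (hA : MeasurableSet A)
    (hp : ∀ r i, P.real {ω | T r ω i ∈ A} ≤ p) (hL : 0 ≤ L) :
    P.real {ω | Fintype.card J * (Fintype.card ι * p + √(Fintype.card ι * L / 2)) ≤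
      ∑ r, ∑ i, A.indicator (1 : 𝓨 → ℝ) (T r ω i)} ≤ Real.exp (-L) := by
  have measurable_indicator : Measurable (A.indicator (1 : 𝓨 → ℝ)) :=
    measurable_one.indicator hA
  have indep_indicator : iIndepFun (fun r ω i ↦ A.indicator (1 : 𝓨 → ℝ) (T r ω i)) P :=
    hindep.comp (fun _ t i ↦ A.indicator (1 : 𝓨 → ℝ) (t i)) fun _ ↦ by fun_prop
  have integral_indicator_le (r : ι) (i : J) :
      ∫ ω, A.indicator (1 : 𝓨 → ℝ) (T r ω i) ∂P ≤ p := by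
    refine le_of_eq_of_le ?_ (hp r i)
    rw [← integral_map (hT r i) measurable_indicator.aestronglyMeasurable,
      integral_indicator_one hA, map_measureReal_apply_of_aemeasurable (hT r i) hA]
    rfl
  exact measureReal_sum_sum_ge_le_exp_neg_of_mem_Icc indep_indicator
    (fun r i ↦ measurable_indicator.comp_aemeasurable (hT r i))
    (fun r i ω ↦ ⟨Set.indicator_nonneg (fun _ _ ↦ zero_le_one) _,
      Set.indicator_le_self' (fun _ _ ↦ zero_le_one) _⟩)
    integral_indicator_le hL

end Concentration

section Network

lemma abs_relu_sub_linearization_le {R s t : ℝ} (hst : |t - s| ≤ R) :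
    |max t 0 - (max s 0 + (Set.Ioi 0).indicator 1 s * (t - s))| ≤
      R * (Set.Icc (-R) R).indicator 1 s := by
  have hR : 0 ≤ R := (abs_nonneg _).trans hst
  obtain ⟨hlower, hupper⟩ := abs_le.1 hst
  have same_sign_of_not_mem (hs : s ∉ Set.Icc (-R) R) : (s < 0 ∧ t ≤ 0) ∨ (0 < s ∧ 0 ≤ t) := by
    rw [Set.mem_Icc, not_and_or, not_le, not_le] at hs
    rcases hs with hs | hs
    · exact .inl ⟨by linarith, by linarith⟩
    · exact .inr ⟨by linarith, by linarith⟩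
  by_cases hs : s ∈ Set.Icc (-R) R
  · rw [Set.indicator_of_mem hs, Pi.one_apply, mul_one]
    rcases le_or_gt s 0 with hs0 | hs0
    · rw [Set.indicator_of_notMem (by simpa using hs0), max_eq_right hs0, abs_le]
      constructor <;> rcases max_cases t 0 with ⟨h, _⟩ | ⟨h, _⟩ <;> linarith
    · rw [Set.indicator_of_mem (by simpa using hs0), max_eq_left hs0.le, Pi.one_apply, abs_le]
      constructor <;> rcases max_cases t 0 with ⟨h, _⟩ | ⟨h, _⟩ <;> linarith
  · rw [Set.indicator_of_notMem hs]
    rcases same_sign_of_not_mem hs with ⟨hs0, ht0⟩ | ⟨hs0, ht0⟩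
    · simp [max_eq_right hs0.le, max_eq_right ht0, hs0.not_gt]
    · simp [max_eq_left hs0.le, max_eq_left ht0, hs0]

variable {E : Type*} [NormedAddCommGroup E] [InnerProductSpace ℝ E] {m n : ℕ}

/-- The two-layer ReLU network with first-layer weights `θ` and second-layer weights `a`. -/
noncomputable def twoLayerReLU (θ : Fin m → E) (a : Fin m → ℝ) (z : E) : ℝ :=
  (1 / √m) * ∑ r, a r * max ⟪θ r, z⟫ 0

/-- First-layer weights within `R` of `θ₀` in every neuron and within `B` of `θ₀` in Frobenius
norm; the networks with these weights form the class `F_{R,B}`. -/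
def weightBall (θ₀ : Fin m → E) (R B : ℝ) : Set (Fin m → E) :=
  {θ | (∀ r, ‖θ r - θ₀ r‖ ≤ R) ∧ √(∑ r, ‖θ r - θ₀ r‖ ^ 2) ≤ B}

/-- The neural tangent feature of `z`: the gradient of the network at `z` with respect to the
first-layer weights `θ`, taking the derivative of the ReLU at `0` to be `0`. -/
noncomputable def tangentFeature (θ : Fin m → E) (a : Fin m → ℝ) (z : E) :
    PiLp 2 fun _ : Fin m ↦ E :=
  WithLp.toLp 2 fun r ↦ (1 / √m * (a r * (Set.Ioi 0).indicator 1 ⟪θ r, z⟫)) • z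

/-- The number of pairs of a neuron and a sample point whose preactivation lies in `A`. -/
noncomputable def preactivationCount (A : Set ℝ) (θ : Fin m → E) (x : Fin n → E) : ℝ :=
  ∑ r, ∑ i, A.indicator 1 ⟪θ r, x i⟫

variable {θ θ₀ : Fin m → E} {a : Fin m → ℝ} {z : E} {R B : ℝ}

lemma norm_tangentFeature_sq_le (ha : ∀ r, |a r| ≤ 1) (hz : ‖z‖ ≤ 1) :
    ‖tangentFeature θ a z‖ ^ 2 ≤ 1 / m * ∑ r, (Set.Ioi 0).indicator 1 ⟪θ r, z⟫ := by
  rw [PiLp.norm_sq_eq_of_L2, Finset.mul_sum]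
  refine Finset.sum_le_sum fun r _ ↦ ?_
  have block_norm_le : ‖tangentFeature θ a z r‖ ≤
      1 / √m * (Set.Ioi 0).indicator 1 ⟪θ r, z⟫ := by
    have indicator_nonneg : (0 : ℝ) ≤ (Set.Ioi 0).indicator 1 ⟪θ r, z⟫ :=
      Set.indicator_nonneg (fun _ _ ↦ zero_le_one) _
    simp only [tangentFeature, norm_smul, norm_mul, Real.norm_eq_abs,
      abs_of_nonneg indicator_nonneg, abs_of_nonneg (by positivity : 0 ≤ 1 / √(m : ℝ))]
    refine (mul_le_of_le_one_right (by positivity) hz).trans ?_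
    gcongr
    exact mul_le_of_le_one_left indicator_nonneg (ha r)
  refine (pow_le_pow_left₀ (norm_nonneg _) block_norm_le 2).trans_eq ?_
  rw [mul_pow, div_pow, one_pow, Real.sq_sqrt (Nat.cast_nonneg m)]
  by_cases h : ⟪θ r, z⟫ ∈ Set.Ioi 0 <;> simp [h]

lemma inner_tangentFeature :
    ⟪WithLp.toLp 2 (θ - θ₀), tangentFeature θ₀ a z⟫ =
      1 / √m * ∑ r, a r * ((Set.Ioi 0).indicator 1 ⟪θ₀ r, z⟫ * (⟪θ r, z⟫ - ⟪θ₀ r, z⟫)) := by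
  simp only [PiLp.inner_apply, tangentFeature, Pi.sub_apply, real_inner_smul_right,
    inner_sub_left, Finset.mul_sum, mul_sub, mul_assoc]

lemma abs_twoLayerReLU_sub_linearization_le (ha : ∀ r, |a r| ≤ 1) (hz : ‖z‖ ≤ 1)
    (hθ : ∀ r, ‖θ r - θ₀ r‖ ≤ R) :
    |twoLayerReLU θ a z -
        (twoLayerReLU θ₀ a z + ⟪WithLp.toLp 2 (θ - θ₀), tangentFeature θ₀ a z⟫)| ≤
      R / √m * ∑ r, (Set.Icc (-R) R).indicator 1 ⟪θ₀ r, z⟫ := by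
  have preactivation_shift_le (r : Fin m) : |⟪θ r, z⟫ - ⟪θ₀ r, z⟫| ≤ R := by
    rw [← inner_sub_left]
    exact (abs_real_inner_le_norm _ _).trans
      ((mul_le_of_le_one_right (norm_nonneg _) hz).trans (hθ r))
  have remainder_eq :
      twoLayerReLU θ a z -
          (twoLayerReLU θ₀ a z + ⟪WithLp.toLp 2 (θ - θ₀), tangentFeature θ₀ a z⟫) =
        1 / √m * ∑ r, a r * (max ⟪θ r, z⟫ 0 - (max ⟪θ₀ r, z⟫ 0 +
          (Set.Ioi 0).indicator 1 ⟪θ₀ r, z⟫ * (⟪θ r, z⟫ - ⟪θ₀ r, z⟫))) := by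
    simp only [twoLayerReLU, inner_tangentFeature, ← mul_add, ← mul_sub,
      ← Finset.sum_add_distrib, ← Finset.sum_sub_distrib]
  rw [remainder_eq, abs_mul, abs_of_nonneg (by positivity), div_mul_eq_mul_div, div_mul_eq_mul_div,
    one_mul, Finset.mul_sum]
  gcongr
  refine (Finset.abs_sum_le_sum_abs _ _).trans (Finset.sum_le_sum fun r _ ↦ ?_)
  rw [abs_mul]
  exact (mul_le_of_le_one_left (abs_nonneg _) (ha r)).trans
    (abs_relu_sub_linearization_le (preactivation_shift_le r))

theorem rademacherComplexity_twoLayerReLU_le {x : Fin n → E} (ha : ∀ r, |a r| ≤ 1)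
    (hx : ∀ i, ‖x i‖ ≤ 1) (hR : 0 ≤ R) (hB : 0 ≤ B) :
    rademacherComplexity (fun θ : weightBall θ₀ R B ↦ twoLayerReLU θ.1 a) x ≤
      (1 / n : ℝ) * (B * √(1 / m * preactivationCount (Set.Ioi 0) θ₀ x) +
        R / √m * preactivationCount (Set.Icc (-R) R) θ₀ x) := by
  have : Nonempty (weightBall θ₀ R B) := ⟨θ₀, by simp [weightBall, hR, hB]⟩
  have sum_norm_sq_le : ∑ i, ‖tangentFeature θ₀ a (x i)‖ ^ 2 ≤
      1 / m * preactivationCount (Set.Ioi 0) θ₀ x := by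
    rw [preactivationCount, Finset.sum_comm, Finset.mul_sum]
    exact Finset.sum_le_sum fun i _ ↦ norm_tangentFeature_sq_le ha (hx i)
  have sum_remainder : ∑ i, R / √m * ∑ r, (Set.Icc (-R) R).indicator 1 ⟪θ₀ r, x i⟫ =
      R / √m * preactivationCount (Set.Icc (-R) R) θ₀ x := by
    rw [preactivationCount, Finset.sum_comm, Finset.mul_sum]
  have affine_bound := rademacherComplexity_le_of_abs_sub_affine_le
    (w := fun θ : weightBall θ₀ R B ↦ WithLp.toLp 2 (θ.1 - θ₀))
    (fun θ ↦ (PiLp.norm_eq_of_L2 _).trans_le θ.2.2)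
    fun θ i ↦ abs_twoLayerReLU_sub_linearization_le ha (hx i) θ.2.1
  rw [sum_remainder] at affine_bound
  exact affine_bound.trans (by gcongr)

lemma sqrt_activeCount_bound_le (hm : 0 < m) (hn : 0 < n) {L : ℝ} (hL : 0 ≤ L) :
    √(1 / m * (n * (m * (1 / 2) + √(m * L / 2)))) ≤
      n * (1 / √(2 * n) * (1 + (2 * L / m) ^ ((1 : ℝ) / 4))) := by
  set q := (2 * L / m) ^ ((1 : ℝ) / 4) with hq
  have q_nonneg : 0 ≤ q := by positivity
  have q_pow_four : q ^ 4 = 2 * L / m := by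
    rw [hq, ← Real.rpow_natCast, ← Real.rpow_mul (by positivity)]
    norm_num
  have sqrt_eq : √(m * L / 2) = m * (q ^ 2 / 2) := by
    rw [Real.sqrt_eq_iff_mul_self_eq (by positivity) (by positivity)]
    calc m * L / 2 = m ^ 2 * q ^ 4 / 4 := by rw [q_pow_four]; field_simp; norm_num
      _ = m * (q ^ 2 / 2) * (m * (q ^ 2 / 2)) := by ring
  refine Real.sqrt_le_iff.2 ⟨by positivity, ?_⟩
  calc 1 / m * (n * (m * (1 / 2) + √(m * L / 2))) = n / 2 * (1 + q ^ 2) := by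
        rw [sqrt_eq]; field_simp
    _ ≤ n / 2 * (1 + q) ^ 2 := by gcongr; nlinarith
    _ = (n * (1 / √(2 * n) * (1 + q))) ^ 2 := by
        simp only [mul_pow, div_pow, one_pow, Real.sq_sqrt (by positivity : 0 ≤ 2 * (n : ℝ))]
        field_simp

lemma unstableCount_bound_le (hm : 0 < m) {κ L : ℝ} (hκ : 0 < κ) (hR : 0 ≤ R) (hL : 0 ≤ L) :
    R / √m * (m * (R / κ) + √(m * L / 2)) ≤ 2 * R ^ 2 * √m / κ + R * √(2 * L) := by
  calc R / √m * (m * (R / κ) + √(m * L / 2)) = R ^ 2 * √m / κ + R * √(L / 2) := by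
        rw [mul_div_assoc, Real.sqrt_mul (Nat.cast_nonneg m)]
        nth_rw 2 [← Real.mul_self_sqrt (Nat.cast_nonneg m)]
        field_simp
    _ ≤ 2 * R ^ 2 * √m / κ + R * √(2 * L) := by
        gcongr <;> nlinarith [sq_nonneg R]

theorem rademacherComplexity_twoLayerReLU_le_of_preactivationCount_le {x : Fin n → E} {κ L : ℝ}
    (hm : 0 < m) (hn : 0 < n) (hκ : 0 < κ) (ha : ∀ r, |a r| ≤ 1) (hx : ∀ i, ‖x i‖ ≤ 1)
    (hR : 0 ≤ R) (hB : 0 ≤ B) (hL : 0 ≤ L)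
    (hactive : preactivationCount (Set.Ioi 0) θ₀ x ≤ n * (m * (1 / 2) + √(m * L / 2)))
    (hunstable : preactivationCount (Set.Icc (-R) R) θ₀ x ≤ n * (m * (R / κ) + √(m * L / 2))) :
    rademacherComplexity (fun θ : weightBall θ₀ R B ↦ twoLayerReLU θ.1 a) x ≤
      B / √(2 * n) * (1 + (2 * L / m) ^ ((1 : ℝ) / 4)) + 2 * R ^ 2 * √m / κ + R * √(2 * L) := by
  have linear_term_le : √(1 / m * preactivationCount (Set.Ioi 0) θ₀ x) ≤
      n * (1 / √(2 * n) * (1 + (2 * L / m) ^ ((1 : ℝ) / 4))) :=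
    le_trans (by gcongr) (sqrt_activeCount_bound_le hm hn hL)
  have remainder_le : R / √m * preactivationCount (Set.Icc (-R) R) θ₀ x ≤
      n * (2 * R ^ 2 * √m / κ + R * √(2 * L)) := by
    calc R / √m * preactivationCount (Set.Icc (-R) R) θ₀ x
        ≤ R / √m * (n * (m * (R / κ) + √(m * L / 2))) := by gcongr
      _ = n * (R / √m * (m * (R / κ) + √(m * L / 2))) := by ring
      _ ≤ n * (2 * R ^ 2 * √m / κ + R * √(2 * L)) := by
        gcongr; exact unstableCount_bound_le hm hκ hR hL
  calc rademacherComplexity (fun θ : weightBall θ₀ R B ↦ twoLayerReLU θ.1 a) x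
      ≤ (1 / n : ℝ) * (B * √(1 / m * preactivationCount (Set.Ioi 0) θ₀ x) +
          R / √m * preactivationCount (Set.Icc (-R) R) θ₀ x) :=
        rademacherComplexity_twoLayerReLU_le ha hx hR hB
    _ ≤ (1 / n : ℝ) * (B * (n * (1 / √(2 * n) * (1 + (2 * L / m) ^ ((1 : ℝ) / 4)))) +
          n * (2 * R ^ 2 * √m / κ + R * √(2 * L))) := by gcongr
    _ = _ := by field_simp; ring

end Network

section Initialization

variable {Ω E : Type*} {mΩ : MeasurableSpace Ω} {P : Measure Ω} [NormedAddCommGroup E]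
  [InnerProductSpace ℝ E] [MeasurableSpace E] [OpensMeasurableSpace E] {m n : ℕ}

lemma measureReal_preactivationCount_ge_le_exp_neg (hm : 0 < m) (hn : 0 < n)
    {Θ : Fin m → Ω → E} {x : Fin n → E} {μ : Measure ℝ} {A : Set ℝ} {p L : ℝ}
    (hindep : iIndepFun Θ P) (hlaw : ∀ r i, HasLaw (fun ω ↦ ⟪Θ r ω, x i⟫) μ P)
    (hA : MeasurableSet A) (hp : μ.real A ≤ p) (hL : 0 ≤ L) :
    P.real {ω | n * (m * p + √(m * L / 2)) ≤ preactivationCount A (Θ · ω) x} ≤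
      Real.exp (-L) := by
  have := hindep.isProbabilityMeasure
  have : NeZero m := ⟨hm.ne'⟩
  have : NeZero n := ⟨hn.ne'⟩
  have indep_rows : iIndepFun (fun r ω i ↦ ⟪Θ r ω, x i⟫) P :=
    hindep.comp (fun _ θ i ↦ ⟪θ, x i⟫) fun _ ↦
      measurable_pi_lambda _ fun i ↦ (continuous_id.inner continuous_const).measurable
  simpa only [preactivationCount, Fintype.card_fin] using
    measureReal_sum_indicator_ge_le_exp_neg indep_rows (fun r i ↦ (hlaw r i).aemeasurable) hA
      (fun r i ↦ ((hlaw r i).measureReal_eq hA).trans_le hp) hL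

theorem rademacher_complexity_bound_two_layer_relu_general {κ δ R : ℝ} (hm : 0 < m) (hn : 0 < n)
    (hκ : 0 < κ) (hδ : δ ∈ Set.Ioo (0 : ℝ) 1) (hR : 0 ≤ R) {x : Fin n → E}
    (hx : ∀ i, ‖x i‖ ≤ 1) {Θ : Fin m → Ω → E} (hindep : iIndepFun Θ P)
    (hlaw : ∀ r i, HasLaw (fun ω ↦ ⟪Θ r ω, x i⟫) (gaussianReal 0 (κ ^ 2).toNNReal) P)
    {a : Fin m → Ω → ℝ} (ha : ∀ᵐ ω ∂P, ∀ r, |a r ω| ≤ 1) :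
    1 - δ ≤ P.real {ω | ∀ B > (0 : ℝ),
      rademacherComplexity (fun θ : weightBall (Θ · ω) R B ↦ twoLayerReLU θ.1 (a · ω)) x ≤
        B / √(2 * n) * (1 + (2 * Real.log (2 / δ) / m) ^ ((1 : ℝ) / 4)) +
          2 * R ^ 2 * √m / κ + R * √(2 * Real.log (2 / δ))} := by
  have := hindep.isProbabilityMeasure
  obtain ⟨hδ0, hδ1⟩ := hδ
  have log_nonneg : 0 ≤ Real.log (2 / δ) :=
    Real.log_nonneg ((one_le_div hδ0).2 (by linarith))
  have exp_neg_log : Real.exp (-Real.log (2 / δ)) = δ / 2 := by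
    rw [Real.exp_neg, Real.exp_log (by positivity), inv_div]
  have active_tail := measureReal_preactivationCount_ge_le_exp_neg hm hn hindep hlaw
    measurableSet_Ioi (measureReal_gaussianReal_Ioi_zero_le _) log_nonneg
  have unstable_tail := measureReal_preactivationCount_ge_le_exp_neg hm hn hindep hlaw
    measurableSet_Icc (measureReal_gaussianReal_Icc_neg_le hκ hR) log_nonneg
  have failure_le := add_le_add active_tail unstable_tail
  rw [exp_neg_log, add_halves] at failure_le
  refine (sub_le_sub_left failure_le 1).trans (one_sub_le_measureReal_of_ae_mem (ha.mono ?_))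
  intro ω ha hactive hunstable B hB
  exact rademacherComplexity_twoLayerReLU_le_of_preactivationCount_le hm hn hκ ha hx hR hB.le
    log_nonneg (not_le.1 hactive).le (not_le.1 hunstable).le

end Initialization

section EuclideanSpace

variable {d m n : ℕ}

lemma twoLayerReLU_toLp (θ : Fin m → Fin d → ℝ) (a : Fin m → ℝ) (z : Fin d → ℝ) :
    twoLayerReLU (fun r ↦ WithLp.toLp 2 (θ r)) a (WithLp.toLp 2 z) =
      1 / √m * ∑ r, a r * max (θ r ⬝ᵥ z) 0 := by
  simp only [twoLayerReLU, inner_toLp_toLp_eq_dotProduct]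

lemma toLp_mem_weightBall_iff {θ θ₀ : Fin m → Fin d → ℝ} {R B : ℝ} :
    (fun r ↦ WithLp.toLp 2 (θ r)) ∈ weightBall (fun r ↦ WithLp.toLp 2 (θ₀ r)) R B ↔
      (∀ r, ‖WithLp.toLp 2 (θ r - θ₀ r)‖ ≤ R) ∧ √(∑ r, ∑ j, (θ r j - θ₀ r j) ^ 2) ≤ B := by
  simp only [weightBall, Set.mem_ofPred_eq, ← WithLp.toLp_sub, EuclideanSpace.norm_sq_eq,
    Pi.sub_apply, Real.norm_eq_abs, sq_abs]

lemma rademacherComplexity_twoLayerReLU_toLp (θ₀ : Fin m → Fin d → ℝ) (a : Fin m → ℝ)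
    (x : Fin n → Fin d → ℝ) (R B : ℝ) :
    rademacherComplexity
        (fun θ : weightBall (fun r ↦ WithLp.toLp 2 (θ₀ r)) R B ↦ twoLayerReLU θ.1 a)
        (fun i ↦ WithLp.toLp 2 (x i)) =
      (1 / n : ℝ) * ∫ ε, (⨆ θ : {θ : Fin m → Fin d → ℝ //
          (∀ r, ‖WithLp.toLp 2 (θ r - θ₀ r)‖ ≤ R) ∧ √(∑ r, ∑ j, (θ r j - θ₀ r j) ^ 2) ≤ B},
        ∑ i, ε i * (1 / √m * ∑ r, a r * max (θ.1 r ⬝ᵥ x i) 0)) ∂rademacherMeasure (Fin n) := by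
  let toLpEquiv := (Equiv.arrowCongr (Equiv.refl (Fin m)) (WithLp.equiv 2 (Fin d → ℝ)).symm)
    |>.subtypeEquiv fun θ ↦ (toLp_mem_weightBall_iff (θ := θ) (θ₀ := θ₀) (R := R) (B := B)).symm
  unfold rademacherComplexity
  congr! 3 with ε
  exact (toLpEquiv.iSup_congr fun θ ↦ Finset.sum_congr rfl fun i _ ↦
    congrArg (ε i * ·) (twoLayerReLU_toLp θ.1 a (x i))).symm

/-- The law of the random initialization: first-layer weights with independent `N(0, κ²)` entries,
and independent uniform second-layer signs. -/
noncomputable def initMeasure (d m : ℕ) (κ : ℝ) :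
    Measure ((Fin m → Fin d → ℝ) × (Fin m → ℝ)) :=
  (Measure.pi fun _ ↦ Measure.pi fun _ ↦ gaussianReal 0 (κ ^ 2).toNNReal).prod
    (rademacherMeasure (Fin m))

lemma hasLaw_fst_initMeasure (κ : ℝ) :
    HasLaw Prod.fst (Measure.pi fun _ : Fin m ↦ Measure.pi fun _ : Fin d ↦
      gaussianReal 0 (κ ^ 2).toNNReal) (initMeasure d m κ) :=
  measurePreserving_fst.hasLaw

lemma iIndepFun_toLp_initMeasure (κ : ℝ) :
    iIndepFun (fun r p ↦ WithLp.toLp 2 (p.1 r)) (initMeasure d m κ) :=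
  (iIndepFun_of_hasLaw_pi (hasLaw_fst_initMeasure κ)).comp _ fun _ ↦ WithLp.measurable_toLp 2 _

lemma hasLaw_inner_toLp_initMeasure (κ : ℝ) {z : Fin d → ℝ} (hz : ‖WithLp.toLp 2 z‖ = 1)
    (r : Fin m) :
    HasLaw (fun p ↦ ⟪WithLp.toLp 2 (p.1 r), WithLp.toLp 2 z⟫)
      (gaussianReal 0 (κ ^ 2).toNNReal) (initMeasure d m κ) :=
  (hasLaw_inner_pi_gaussianReal_of_norm_eq_one _ hz).comp
    ((measurePreserving_eval _ r).comp_hasLaw (hasLaw_fst_initMeasure κ))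

lemma ae_abs_snd_le_one_initMeasure (κ : ℝ) : ∀ᵐ p ∂initMeasure d m κ, ∀ r, |p.2 r| ≤ 1 :=
  Measure.quasiMeasurePreserving_snd.ae
    (ae_abs_eq_one_rademacherMeasure.mono fun _ h r ↦ (h r).le)

end EuclideanSpace

/-- Lemma 5.4-style Rademacher complexity bound (Arora et al.) for two-layer ReLU networks:
with first-layer weights initialized i.i.d. `N(0, κ² I_d)` and second-layer signs i.i.d.
uniform on `{-1, 1}`, with probability at least `1 - δ` over the initialization `(θ(0), a)`,
simultaneously for every `B > 0`, the empirical Rademacher complexity of the class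
`F_{R,B} = {f_{θ,a} : ‖θ_r - θ_r(0)‖₂ ≤ R ∀r, ‖θ - θ(0)‖_F ≤ B}` on unit-norm data
`x₁, …, xₙ` is at most
`B/√(2n) · (1 + (2 log(2/δ)/m)^{1/4}) + 2R²√m/κ + R √(2 log(2/δ))`. -/
theorem rademacher_complexity_bound_two_layer_relu
    (d m n : ℕ) (hm : 0 < m) (hn : 0 < n)
    (κ : ℝ) (hκ : 0 < κ) (δ : ℝ) (hδ : δ ∈ Set.Ioo (0 : ℝ) 1) (R : ℝ) (hR : 0 < R)
    (x : Fin n → Fin d → ℝ)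
    (hx : ∀ i, ‖(WithLp.equiv 2 (Fin d → ℝ)).symm (x i)‖ = 1) :
    -- uniform measure on the signs {-1, 1} ⊆ ℝ
    let signMeasure : Measure ℝ :=
      (1 / 2 : ENNReal) • Measure.dirac (-1 : ℝ) + (1 / 2 : ENNReal) • Measure.dirac (1 : ℝ)
    -- initialization: θ_r(0) i.i.d. N(0, κ² I_d), a_r i.i.d. uniform on {-1, 1}
    let μ₀ : Measure ((Fin m → Fin d → ℝ) × (Fin m → ℝ)) :=
      (Measure.pi fun _ : Fin m => Measure.pi fun _ : Fin d =>
          gaussianReal 0 (Real.toNNReal (κ ^ 2))).prod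
        (Measure.pi fun _ : Fin m => signMeasure)
    -- Rademacher vector ε uniform on {-1, 1}ⁿ
    let ν : Measure (Fin n → ℝ) := Measure.pi fun _ : Fin n => signMeasure
    -- the two-layer ReLU network f_{θ,a}
    let net : (Fin m → Fin d → ℝ) → (Fin m → ℝ) → (Fin d → ℝ) → ℝ :=
      fun θ a z => (1 / Real.sqrt m) * ∑ r : Fin m, a r * max (θ r ⬝ᵥ z) 0
    (1 - δ) ≤
      (μ₀ {p : (Fin m → Fin d → ℝ) × (Fin m → ℝ) | ∀ B > (0 : ℝ),
        (1 / n : ℝ) *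
            ∫ ε, (⨆ θ : {θ : Fin m → Fin d → ℝ //
                (∀ r, ‖(WithLp.equiv 2 (Fin d → ℝ)).symm (θ r - p.1 r)‖ ≤ R) ∧
                Real.sqrt (∑ r : Fin m, ∑ j : Fin d, (θ r j - p.1 r j) ^ 2) ≤ B},
              ∑ i : Fin n, ε i * net θ.1 p.2 (x i)) ∂ν ≤
          B / Real.sqrt (2 * n) * (1 + (2 * Real.log (2 / δ) / m) ^ ((1 : ℝ) / 4)) +
            2 * R ^ 2 * Real.sqrt m / κ + R * Real.sqrt (2 * Real.log (2 / δ))}).toReal := by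
  intro _ _ _ _
  have bound := rademacher_complexity_bound_two_layer_relu_general
    (x := fun i ↦ WithLp.toLp 2 (x i)) hm hn hκ hδ hR.le (fun i ↦ (hx i).le)
    (iIndepFun_toLp_initMeasure κ) (fun r i ↦ hasLaw_inner_toLp_initMeasure κ (hx i) r)
    (ae_abs_snd_le_one_initMeasure κ)
  simp only [rademacherComplexity_twoLayerReLU_toLp] at bound
  exact bound
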